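/- Let A be an n×n real matrix and C an m×n real matrix such that the pair (A, C) is completely observable, and let δ > 0. Then there exists a constant c > 0, depending only on A, C and δ, such that for every interval I of length at least δ, every absolutely continuous function z : I → ℝ^n and every integrable f : I → ℝ^n satisfying ż(t) = A z(t) + f(t) for almost every t ∈ I, one has ∫_I |z(t)| dt ≤ c ( ∫_I |C z(t)| dt + ∫_I |f(t)| dt ). -/

import Mathlib

open MeasureTheory

/-- The pair `(A, C)` is completely observable: the only vector `v` with
`C A^k v = 0` for all `k = 0, …, n-1` is `v = 0`. -/
def CompletelyObservable (n m : ℕ) (A : Matrix (Fin n) (Fin n) ℝ)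
    (C : Matrix (Fin m) (Fin n) ℝ) : Prop :=
  ∀ v : Fin n → ℝ, (∀ k < n, (C * A ^ k).mulVec v = 0) → v = 0

/-!
Over a time `δ`, observability makes `v ↦ ∫_0^δ ‖C e^{tA} v‖ dt` a norm on the finite-dimensional
state space, so it bounds the Euclidean norm of `v` up to a constant. By Grönwall a solution `z`
of `ż = A z + f` starting at `a` differs from the free motion `e^{(t-a)A} z(a)` by at most a constant
times `∫ ‖f‖`; hence `z(a)`, and by Grönwall again all of `z`, is controlled by `∫ ‖C z‖ + ∫ ‖f‖` on
any interval of length between `δ` and `2δ`. A longer interval is cut into such intervals, and the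
estimates with their common constant are added up.
-/

open Set Filter Topology intervalIntegral
open NormedSpace (exp)

section RealIntegrals

variable {u g h : ℝ → ℝ} {a b α k δ : ℝ}

lemma hasDerivWithinAt_integral_Ici_of_continuousOn {x : ℝ} (hu : ContinuousOn u (Icc a b))
    (hx : x ∈ Ico a b) : HasDerivWithinAt (fun t => ∫ s in a..t, u s) (u x) (Ici x) x := by
  have hx' : x ∈ Icc a b := Ico_subset_Icc_self hx
  have hmem : Icc a b ∈ 𝓝[>] x :=
    mem_of_superset (Ioc_mem_nhdsGT hx.2) fun y hy => ⟨hx.1.trans hy.1.le, hy.2⟩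
  exact integral_hasDerivWithinAt_right
    ((hu.mono (Icc_subset_Icc_right hx.2.le)).intervalIntegrable_of_Icc hx.1)
    ⟨Icc a b, hmem, hu.aestronglyMeasurable measurableSet_Icc⟩
    ((hu x hx').mono_of_mem_nhdsWithin hmem)

lemma le_mul_exp_of_le_add_integral (hk : 0 ≤ k) (hu : ContinuousOn u (Icc a b))
    (hle : ∀ t ∈ Icc a b, u t ≤ α + k * ∫ s in a..t, u s) {t : ℝ} (ht : t ∈ Icc a b) :
    u t ≤ α * Real.exp (k * (t - a)) := by
  have hab : a ≤ b := ht.1.trans ht.2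
  have hcont : ContinuousOn (fun t => α + k * ∫ s in a..t, u s) (Icc a b) := by
    have := continuousOn_primitive_interval (μ := volume) (f := u) (a := a) (b := b)
      (by rw [uIcc_of_le hab]; exact hu.integrableOn_Icc)
    rw [uIcc_of_le hab] at this
    fun_prop
  have hderiv : ∀ x ∈ Ico a b,
      HasDerivWithinAt (fun t => α + k * ∫ s in a..t, u s) (k * u x) (Ici x) x :=
    fun x hx => ((hasDerivWithinAt_integral_Ici_of_continuousOn hu hx).const_mul k).const_add α
  have hgronwall := le_gronwallBound_of_liminf_deriv_right_le (δ := α) (K := k) (ε := 0) hcont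
    (fun x hx r hr => by
      simpa [slope_def_field, div_eq_inv_mul] using (hderiv x hx).liminf_right_slope_le hr)
    (by simp)
    (fun x hx => by simpa using mul_le_mul_of_nonneg_left (hle x (Ico_subset_Icc_self hx)) hk)
    t ht
  rw [gronwallBound_ε0] at hgronwall
  exact (hle t ht).trans hgronwall

lemma exists_nat_div_mem_Icc {l : ℝ} (hδ : 0 < δ) (hl : δ ≤ l) :
    ∃ N : ℕ, 0 < N ∧ l / N ∈ Icc δ (2 * δ) := by
  have hone : 1 ≤ l / δ := (one_le_div hδ).2 hl
  have hpos : 0 < ⌊l / δ⌋₊ := Nat.floor_pos.2 hone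
  have hN : (1 : ℝ) ≤ ⌊l / δ⌋₊ := mod_cast hpos
  have hlower : ⌊l / δ⌋₊ * δ ≤ l := (le_div_iff₀ hδ).1 (Nat.floor_le (by linarith))
  have hupper : l < (⌊l / δ⌋₊ + 1) * δ := (div_lt_iff₀ hδ).1 (Nat.lt_floor_add_one _)
  refine ⟨_, hpos, (le_div_iff₀ (by linarith)).2 (by linarith), (div_le_iff₀ (by linarith)).2 ?_⟩
  nlinarith

lemma integral_le_integral_of_forall_short_subinterval (hδ : 0 < δ) (hab : δ ≤ b - a)
    (hg : IntervalIntegrable g volume a b) (hh : IntervalIntegrable h volume a b)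
    (hle : ∀ s t, a ≤ s → t ≤ b → t - s ∈ Icc δ (2 * δ) → ∫ x in s..t, g x ≤ ∫ x in s..t, h x) :
    ∫ x in a..b, g x ≤ ∫ x in a..b, h x := by
  obtain ⟨N, hN, hmesh⟩ := exists_nat_div_mem_Icc hδ hab
  set l := (b - a) / N with hl
  have hl0 : 0 ≤ l := hδ.le.trans hmesh.1
  let p : ℕ → ℝ := fun i => a + i * l
  have hp0 : p 0 = a := by simp [p]
  have hpN : p N = b := by
    simp only [p, hl]
    rw [mul_div_cancel₀ _ (Nat.cast_ne_zero.2 hN.ne'), add_sub_cancel]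
  have hpmono : Monotone p := fun i j hij => by simp only [p]; gcongr
  have hstep : ∀ i, p (i + 1) - p i = l := fun i => by simp only [p]; push_cast; ring
  have hleft : ∀ i, a ≤ p i := fun i => hp0 ▸ hpmono i.zero_le
  have hright : ∀ i < N, p (i + 1) ≤ b := fun i hi => hpN ▸ hpmono hi
  have hsub : ∀ i < N, uIcc (p i) (p (i + 1)) ⊆ uIcc a b := fun i hi => by
    rw [uIcc_of_le (hpmono i.le_succ), uIcc_of_le (by linarith)]
    exact Icc_subset_Icc (hleft i) (hright i hi)
  have hsum : ∀ {φ : ℝ → ℝ}, IntervalIntegrable φ volume a b →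
      ∑ i ∈ Finset.range N, ∫ x in p i..p (i + 1), φ x = ∫ x in a..b, φ x := fun hφ => by
    rw [sum_integral_adjacent_intervals fun i hi => hφ.mono_set (hsub i hi), hp0, hpN]
  rw [← hsum hg, ← hsum hh]
  refine Finset.sum_le_sum fun i hi => hle _ _ (hleft i) (hright i (Finset.mem_range.1 hi)) ?_
  rwa [hstep]

end RealIntegrals

variable {E F : Type*} [NormedAddCommGroup E] [NormedSpace ℝ E]
  [NormedAddCommGroup F] [NormedSpace ℝ F] {L : E →L[ℝ] E} {K : E →L[ℝ] F}

/-- Observability of the pair `(L, K)` of a generator and an output operator: a state is determined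
by the values `K L^k v`. All powers are allowed, so that the notion makes sense in infinite
dimension; for matrices of size `n` the powers `k < n` suffice. -/
def IsObservable (L : E →L[ℝ] E) (K : E →L[ℝ] F) : Prop :=
  ∀ v, (∀ k : ℕ, K ((L ^ k) v) = 0) → v = 0

lemma CompletelyObservable.isObservable {n m : ℕ} {A : Matrix (Fin n) (Fin n) ℝ}
    {C : Matrix (Fin m) (Fin n) ℝ} (h : CompletelyObservable n m A C) :
    IsObservable (Matrix.toEuclideanLin A).toContinuousLinearMap
      (Matrix.toEuclideanLin C).toContinuousLinearMap := by
  intro v hv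
  have hpow : ∀ k : ℕ, ((Matrix.toEuclideanLin A).toContinuousLinearMap ^ k) v =
      Matrix.toEuclideanLin (A ^ k) v := fun k => by
    rw [Matrix.toEuclideanLin, Matrix.toLpLin_pow, ← ContinuousLinearMap.coe_coe,
      ContinuousLinearMap.toLinearMap_pow, LinearMap.coe_toContinuousLinearMap]
  refine (WithLp.ofLp_eq_zero 2).1 (h v.ofLp fun k _ => ?_)
  have hk := congrArg WithLp.ofLp (hv k)
  rwa [hpow, LinearMap.coe_toContinuousLinearMap', Matrix.ofLp_toLpLin, Matrix.ofLp_toLpLin,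
    Matrix.toLin'_apply, Matrix.toLin'_apply, Matrix.mulVec_mulVec] at hk

section FreeMotion

variable [CompleteSpace E]

lemma hasDerivAt_exp_smul_apply (L : E →L[ℝ] E) (v : E) (t : ℝ) :
    HasDerivAt (fun t : ℝ => exp (t • L) v) (L (exp (t • L) v)) t := by
  simpa using (hasDerivAt_exp_smul_const' L t).clm_apply (hasDerivAt_const t v)

lemma continuous_exp_smul_apply (L : E →L[ℝ] E) (v : E) :
    Continuous fun t : ℝ => exp (t • L) v :=
  continuous_iff_continuousAt.2 fun t => (hasDerivAt_exp_smul_apply L v t).continuousAt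

lemma continuous_output (L : E →L[ℝ] E) (K : E →L[ℝ] F) (v : E) :
    Continuous fun t : ℝ => K (exp (t • L) v) :=
  K.continuous.comp (continuous_exp_smul_apply L v)

lemma exp_apply_eq_zero_iff {v : E} : exp L v = 0 ↔ v = 0 := by
  let : NormedAlgebra ℚ (E →L[ℝ] E) := NormedAlgebra.restrictScalars ℚ ℝ _
  exact map_eq_zero_iff _ (ContinuousLinearMap.isUnit_iff_bijective.1
    (NormedSpace.isUnit_exp L)).injective

lemma eventually_output_pow_eq_zero {v : E} {s : ℝ}
    (hv : (fun t : ℝ => K (exp (t • L) v)) =ᶠ[𝓝 s] 0) (k : ℕ) :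
    (fun t : ℝ => K ((L ^ k) (exp (t • L) v))) =ᶠ[𝓝 s] 0 := by
  induction k with
  | zero => simpa using hv
  | succ k ih =>
    have hderiv : deriv (fun t : ℝ => K ((L ^ k) (exp (t • L) v))) =
        fun t : ℝ => K ((L ^ (k + 1)) (exp (t • L) v)) := funext fun t =>
      ((K.comp (L ^ k)).hasFDerivAt.comp_hasDerivAt t (hasDerivAt_exp_smul_apply L v t)).deriv
    rw [← hderiv]
    simpa using ih.deriv

lemma IsObservable.eq_zero_of_eventually_output_eq_zero (hobs : IsObservable L K) {v : E} {s : ℝ}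
    (hv : (fun t : ℝ => K (exp (t • L) v)) =ᶠ[𝓝 s] 0) : v = 0 :=
  exp_apply_eq_zero_iff.1 <| hobs _ fun k => (eventually_output_pow_eq_zero hv k).eq_of_nhds

lemma integrable_output (L : E →L[ℝ] E) (K : E →L[ℝ] F) (δ : ℝ) (v : E) :
    Integrable (fun t : ℝ => K (exp (t • L) v)) (volume.restrict (Icc 0 δ)) :=
  (continuous_output L K v).integrableOn_Icc

/-- The observability map, sending an initial state to the output of its free motion during the
time interval `[0, δ]`. It takes values in `L¹` since the estimate is about `L¹` norms. -/
noncomputable def outputMap (L : E →L[ℝ] E) (K : E →L[ℝ] F) (δ : ℝ) :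
    E →ₗ[ℝ] (ℝ →₁[volume.restrict (Icc 0 δ)] F) where
  toFun v := (integrable_output L K δ v).toL1
  map_add' v w := by
    rw [← Integrable.toL1_add]
    congr 1
    ext t
    simp
  map_smul' r v := by
    rw [RingHom.id_apply, ← Integrable.toL1_smul]
    congr 1
    ext t
    simp

lemma norm_outputMap {δ : ℝ} (hδ : 0 ≤ δ) (v : E) :
    ‖outputMap L K δ v‖ = ∫ t in 0..δ, ‖K (exp (t • L) v)‖ := by
  rw [integral_of_le hδ, ← integral_Icc_eq_integral_Ioc]
  exact L1.norm_of_fun_eq_integral_norm (integrable_output L K δ v)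

lemma IsObservable.ker_outputMap_eq_bot (hobs : IsObservable L K) {δ : ℝ} (hδ : 0 < δ) :
    LinearMap.ker (outputMap L K δ) = ⊥ := by
  refine LinearMap.ker_eq_bot'.2 fun v hv => ?_
  have hae : (fun t : ℝ => K (exp (t • L) v)) =ᵐ[volume.restrict (Icc 0 δ)] 0 :=
    (Integrable.toL1_eq_toL1_iff _ _ (integrable_output L K δ v) (integrable_zero ℝ F _)).1 hv
  have heq : EqOn (fun t : ℝ => K (exp (t • L) v)) 0 (Icc 0 δ) :=
    Measure.eqOn_Icc_of_ae_eq volume hδ.ne hae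
      (continuous_output L K v).continuousOn continuousOn_const
  exact hobs.eq_zero_of_eventually_output_eq_zero (s := δ / 2) <|
    heq.eventuallyEq_of_mem (Icc_mem_nhds (by linarith) (by linarith))

lemma IsObservable.exists_norm_le_mul_integral_output [FiniteDimensional ℝ E]
    (hobs : IsObservable L K) {δ : ℝ} (hδ : 0 < δ) :
    ∃ c > 0, ∀ v : E, ‖v‖ ≤ c * ∫ t in 0..δ, ‖K (exp (t • L) v)‖ := by
  obtain ⟨c, hc, hanti⟩ :=
    (outputMap L K δ).exists_antilipschitzWith (hobs.ker_outputMap_eq_bot hδ)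
  refine ⟨c, hc, fun v => ?_⟩
  rw [← norm_outputMap hδ.le]
  exact hanti.le_mul_norm (map_zero _) v

end FreeMotion

/-- `z` solves `ż = L z + f` on `[a, b]` in the sense of Carathéodory: the forcing `f` is
integrable, `z` is continuous, and the equation holds in integrated form. This is meaningful for
complete `E` only, Bochner integrals in an incomplete space being `0`. -/
structure IsSolutionOn (L : E →L[ℝ] E) (z f : ℝ → E) (a b : ℝ) : Prop where
  continuousOn : ContinuousOn z (Icc a b)
  integrableOn : IntegrableOn f (Icc a b)
  eq_add_integral : ∀ t ∈ Icc a b, z t = z a + ∫ s in a..t, (L (z s) + f s)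

namespace IsSolutionOn

variable {z w f g : ℝ → E} {a b s t c δ : ℝ}

lemma intervalIntegrable_add (hz : IsSolutionOn L z f a b) (has : a ≤ s) (hst : s ≤ t)
    (htb : t ≤ b) : IntervalIntegrable (fun r => L (z r) + f r) volume s t := by
  have hint : IntegrableOn (fun r => L (z r) + f r) (Icc a b) :=
    (L.continuous.comp_continuousOn hz.continuousOn).integrableOn_Icc.add hz.integrableOn
  exact (intervalIntegrable_iff_integrableOn_Icc_of_le hst).2
    (hint.mono_set (Icc_subset_Icc has htb))

lemma mono (hz : IsSolutionOn L z f a b) (has : a ≤ s) (htb : t ≤ b) :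
    IsSolutionOn L z f s t where
  continuousOn := hz.continuousOn.mono (Icc_subset_Icc has htb)
  integrableOn := hz.integrableOn.mono_set (Icc_subset_Icc has htb)
  eq_add_integral r hr := by
    have hrb : r ≤ b := hr.2.trans htb
    have hsb : s ≤ b := hr.1.trans hrb
    rw [hz.eq_add_integral r ⟨has.trans hr.1, hrb⟩, hz.eq_add_integral s ⟨has, hsb⟩, add_assoc,
      integral_add_adjacent_intervals (hz.intervalIntegrable_add le_rfl has hsb)
        (hz.intervalIntegrable_add has hr.1 hrb)]

lemma sub (hz : IsSolutionOn L z f a b) (hw : IsSolutionOn L w g a b) :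
    IsSolutionOn L (z - w) (f - g) a b where
  continuousOn := hz.continuousOn.sub hw.continuousOn
  integrableOn := hz.integrableOn.sub hw.integrableOn
  eq_add_integral t ht := by
    have hsplit : ∫ s in a..t, (L ((z - w) s) + (f - g) s) =
        (∫ s in a..t, (L (z s) + f s)) - ∫ s in a..t, (L (w s) + g s) := by
      rw [← integral_sub (hz.intervalIntegrable_add le_rfl ht.1 ht.2)
        (hw.intervalIntegrable_add le_rfl ht.1 ht.2)]
      congr 1 with s
      simp only [Pi.sub_apply, map_sub]
      abel
    rw [hsplit, Pi.sub_apply, Pi.sub_apply, hz.eq_add_integral t ht, hw.eq_add_integral t ht]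
    abel

lemma intervalIntegrable_norm (hz : IsSolutionOn L z f a b) (hab : a ≤ b) :
    IntervalIntegrable (fun t => ‖z t‖) volume a b :=
  hz.continuousOn.norm.intervalIntegrable_of_Icc hab

lemma intervalIntegrable_norm_output (hz : IsSolutionOn L z f a b) (K : E →L[ℝ] F) (hab : a ≤ b) :
    IntervalIntegrable (fun t => ‖K (z t)‖) volume a b :=
  (K.continuous.comp_continuousOn hz.continuousOn).norm.intervalIntegrable_of_Icc hab

lemma intervalIntegrable_norm_forcing (hz : IsSolutionOn L z f a b) (hab : a ≤ b) :
    IntervalIntegrable (fun t => ‖f t‖) volume a b :=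
  (intervalIntegrable_iff_integrableOn_Icc_of_le hab).2 hz.integrableOn.norm

lemma norm_le_add_integral (hz : IsSolutionOn L z f a b) (ht : t ∈ Icc a b) :
    ‖z t‖ ≤ (‖z a‖ + ∫ s in a..b, ‖f s‖) + ‖L‖ * ∫ s in a..t, ‖z s‖ := by
  have hzt := ((hz.mono le_rfl ht.2).intervalIntegrable_norm ht.1).const_mul ‖L‖
  have hft := (hz.mono le_rfl ht.2).intervalIntegrable_norm_forcing ht.1
  have hforcing : ∫ s in a..t, ‖f s‖ ≤ ∫ s in a..b, ‖f s‖ :=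
    integral_mono_interval le_rfl ht.1 ht.2 (.of_forall fun _ => norm_nonneg _)
      (hz.intervalIntegrable_norm_forcing (ht.1.trans ht.2))
  calc ‖z t‖ = ‖z a + ∫ s in a..t, (L (z s) + f s)‖ := by rw [← hz.eq_add_integral t ht]
    _ ≤ ‖z a‖ + ‖∫ s in a..t, (L (z s) + f s)‖ := norm_add_le _ _
    _ ≤ ‖z a‖ + ∫ s in a..t, (‖L‖ * ‖z s‖ + ‖f s‖) := by
      gcongr
      exact norm_integral_le_of_norm_le ht.1 (.of_forall fun s _ =>
        norm_add_le_of_le (L.le_opNorm _) le_rfl) (hzt.add hft)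
    _ = ‖z a‖ + (‖L‖ * (∫ s in a..t, ‖z s‖) + ∫ s in a..t, ‖f s‖) := by
      rw [integral_add hzt hft, intervalIntegral.integral_const_mul]
    _ ≤ _ := by linarith

lemma norm_le_mul_exp (hz : IsSolutionOn L z f a b) (ht : t ∈ Icc a b) :
    ‖z t‖ ≤ (‖z a‖ + ∫ s in a..b, ‖f s‖) * Real.exp (‖L‖ * (b - a)) := by
  have hf : 0 ≤ ∫ s in a..b, ‖f s‖ :=
    integral_nonneg (ht.1.trans ht.2) fun _ _ => norm_nonneg _
  refine (le_mul_exp_of_le_add_integral (norm_nonneg L) hz.continuousOn.norm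
    (fun _ hs => hz.norm_le_add_integral hs) ht).trans ?_
  gcongr
  exact ht.2

lemma integral_norm_le_mul_exp (hz : IsSolutionOn L z f a b) (hab : a ≤ b) :
    ∫ t in a..b, ‖z t‖ ≤
      (b - a) * ((‖z a‖ + ∫ s in a..b, ‖f s‖) * Real.exp (‖L‖ * (b - a))) := by
  rw [← smul_eq_mul (b - a), ← intervalIntegral.integral_const]
  exact integral_mono_on hab (hz.intervalIntegrable_norm hab) intervalIntegrable_const
    fun t ht => hz.norm_le_mul_exp ht

section Complete

variable [CompleteSpace E]

lemma exp_sub_smul_apply (L : E →L[ℝ] E) (v : E) (a b : ℝ) :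
    IsSolutionOn L (fun t => exp ((t - a) • L) v) 0 a b where
  continuousOn := ((continuous_exp_smul_apply L v).comp (continuous_sub_right a)).continuousOn
  integrableOn := integrableOn_zero
  eq_add_integral t _ := by
    have hcont := (continuous_output L L v).comp (continuous_sub_right a)
    have hderiv : ∀ s, HasDerivAt (fun s => exp ((s - a) • L) v) (L (exp ((s - a) • L) v)) s :=
      fun s => (hasDerivAt_exp_smul_apply L v (s - a)).comp_sub_const s a
    simp only [Pi.zero_apply, add_zero]
    rw [integral_eq_sub_of_hasDerivAt (fun s _ => hderiv s) (hcont.intervalIntegrable a t)]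
    abel

lemma norm_sub_exp_smul_apply_le (hz : IsSolutionOn L z f a b) (ht : t ∈ Icc a b) :
    ‖z t - exp ((t - a) • L) (z a)‖ ≤ (∫ s in a..b, ‖f s‖) * Real.exp (‖L‖ * (b - a)) := by
  simpa using (hz.sub (exp_sub_smul_apply L (z a) a b)).norm_le_mul_exp ht

lemma norm_output_exp_smul_apply_le (hz : IsSolutionOn L z f a b) (K : E →L[ℝ] F)
    (ht : t ∈ Icc a b) :
    ‖K (exp ((t - a) • L) (z a))‖ ≤
      ‖K (z t)‖ + ‖K‖ * ((∫ s in a..b, ‖f s‖) * Real.exp (‖L‖ * (b - a))) := by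
  calc ‖K (exp ((t - a) • L) (z a))‖
      = ‖K (z t) - K (z t - exp ((t - a) • L) (z a))‖ := by rw [← map_sub, sub_sub_cancel]
    _ ≤ ‖K (z t)‖ + ‖K (z t - exp ((t - a) • L) (z a))‖ := norm_sub_le _ _
    _ ≤ _ := by
      gcongr
      exact K.le_opNorm_of_le (hz.norm_sub_exp_smul_apply_le ht)

lemma norm_left_le (hz : IsSolutionOn L z f a (a + δ)) (hδ : 0 ≤ δ) (hc : 0 ≤ c)
    (hobs : ∀ v, ‖v‖ ≤ c * ∫ t in 0..δ, ‖K (exp (t • L) v)‖) :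
    ‖z a‖ ≤ c * ((∫ t in a..a + δ, ‖K (z t)‖) +
      δ * ‖K‖ * Real.exp (‖L‖ * δ) * ∫ t in a..a + δ, ‖f t‖) := by
  have hab : a ≤ a + δ := by linarith
  have hshift : ∫ t in 0..δ, ‖K (exp (t • L) (z a))‖ =
      ∫ t in a..a + δ, ‖K (exp ((t - a) • L) (z a))‖ := by
    rw [integral_comp_sub_right (fun t => ‖K (exp (t • L) (z a))‖), sub_self, add_sub_cancel_left]
  have hKz := hz.intervalIntegrable_norm_output K hab
  refine (hobs (z a)).trans (mul_le_mul_of_nonneg_left ?_ hc)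
  calc ∫ t in 0..δ, ‖K (exp (t • L) (z a))‖
      = ∫ t in a..a + δ, ‖K (exp ((t - a) • L) (z a))‖ := hshift
    _ ≤ ∫ t in a..a + δ, (‖K (z t)‖ + ‖K‖ * ((∫ s in a..a + δ, ‖f s‖) *
          Real.exp (‖L‖ * (a + δ - a)))) :=
      integral_mono_on hab
        ((exp_sub_smul_apply L (z a) a (a + δ)).intervalIntegrable_norm_output K hab)
        (hKz.add intervalIntegrable_const) fun t ht => hz.norm_output_exp_smul_apply_le K ht
    _ = _ := by
      rw [integral_add hKz intervalIntegrable_const, intervalIntegral.integral_const,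
        add_sub_cancel_left, smul_eq_mul]
      ring

lemma integral_norm_le_of_sub_mem_Icc (hz : IsSolutionOn L z f a b) (hδ : 0 ≤ δ)
    (hab : b - a ∈ Icc δ (2 * δ)) (hc : 0 ≤ c)
    (hobs : ∀ v, ‖v‖ ≤ c * ∫ t in 0..δ, ‖K (exp (t • L) v)‖) :
    ∫ t in a..b, ‖z t‖ ≤
      2 * δ * Real.exp (‖L‖ * (2 * δ)) * (c * (1 + δ * ‖K‖ * Real.exp (‖L‖ * δ)) + 1) *
        ((∫ t in a..b, ‖K (z t)‖) + ∫ t in a..b, ‖f t‖) := by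
  have haδ : a ≤ a + δ := by linarith
  have hδb : a + δ ≤ b := by linarith [hab.1]
  have hle : a ≤ b := haδ.trans hδb
  set κ := δ * ‖K‖ * Real.exp (‖L‖ * δ)
  set Y := ∫ t in a..b, ‖K (z t)‖
  set P := ∫ t in a..b, ‖f t‖
  have hκ : 0 ≤ κ := by positivity
  have hY : 0 ≤ Y := integral_nonneg hle fun _ _ => norm_nonneg _
  have hP : 0 ≤ P := integral_nonneg hle fun _ _ => norm_nonneg _
  have hYδ : ∫ t in a..a + δ, ‖K (z t)‖ ≤ Y :=
    integral_mono_interval le_rfl haδ hδb (.of_forall fun _ => norm_nonneg _)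
      (hz.intervalIntegrable_norm_output K hle)
  have hPδ : ∫ t in a..a + δ, ‖f t‖ ≤ P :=
    integral_mono_interval le_rfl haδ hδb (.of_forall fun _ => norm_nonneg _)
      (hz.intervalIntegrable_norm_forcing hle)
  have hza : ‖z a‖ ≤ c * (1 + κ) * (Y + P) :=
    calc ‖z a‖ ≤ c * ((∫ t in a..a + δ, ‖K (z t)‖) + κ * ∫ t in a..a + δ, ‖f t‖) :=
          (hz.mono le_rfl hδb).norm_left_le hδ hc hobs
      _ ≤ c * ((Y + P) + κ * (Y + P)) :=
        mul_le_mul_of_nonneg_left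
          (add_le_add (by linarith) (mul_le_mul_of_nonneg_left (by linarith) hκ)) hc
      _ = c * (1 + κ) * (Y + P) := by ring
  calc ∫ t in a..b, ‖z t‖ ≤ (b - a) * ((‖z a‖ + P) * Real.exp (‖L‖ * (b - a))) :=
        hz.integral_norm_le_mul_exp hle
    _ ≤ 2 * δ * ((c * (1 + κ) * (Y + P) + (Y + P)) * Real.exp (‖L‖ * (2 * δ))) := by
      gcongr
      · exact hab.2
      · linarith
      · exact hab.2
    _ = _ := by ring

end Complete

end IsSolutionOn

theorem observability_estimate_length_ge_general [FiniteDimensional ℝ E]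
    (hobs : IsObservable L K) {δ : ℝ} (hδ : 0 < δ) :
    ∃ c > 0, ∀ a b : ℝ, δ ≤ b - a → ∀ z f : ℝ → E, IsSolutionOn L z f a b →
      (∫ t in Icc a b, ‖z t‖) ≤
        c * ((∫ t in Icc a b, ‖K (z t)‖) + ∫ t in Icc a b, ‖f t‖) := by
  have : CompleteSpace E := FiniteDimensional.complete ℝ E
  obtain ⟨c, hc, hfree⟩ := hobs.exists_norm_le_mul_integral_output hδ
  refine ⟨2 * δ * Real.exp (‖L‖ * (2 * δ)) * (c * (1 + δ * ‖K‖ * Real.exp (‖L‖ * δ)) + 1),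
    by positivity, fun a b hab z f hz => ?_⟩
  have hle : a ≤ b := by linarith
  have hKz := hz.intervalIntegrable_norm_output K hle
  have hf := hz.intervalIntegrable_norm_forcing hle
  simp only [integral_Icc_eq_integral_Ioc, ← integral_of_le hle]
  rw [← integral_add hKz hf, ← intervalIntegral.integral_const_mul]
  refine integral_le_integral_of_forall_short_subinterval hδ hab (hz.intervalIntegrable_norm hle)
    ((hKz.add hf).const_mul _) fun s t has htb hst => ?_
  have hst' : s ≤ t := by linarith [hst.1]
  have hzst := hz.mono has htb
  rw [intervalIntegral.integral_const_mul, integral_add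
    (hzst.intervalIntegrable_norm_output K hst') (hzst.intervalIntegrable_norm_forcing hst')]
  exact hzst.integral_norm_le_of_sub_mem_Icc hδ.le hst hc.le hfree

/-- **Observability estimate on intervals of length at least `δ`.**
If `(A, C)` is completely observable and `δ > 0`, there is `c > 0` (depending only
on `A`, `C`, `δ`) such that for every interval `I = [a, b]` of length `b - a ≥ δ`,
every absolutely continuous `z` and integrable `f` with `ż = A z + f` a.e. on `I`,
one has `∫_I ‖z‖ ≤ c (∫_I ‖C z‖ + ∫_I ‖f‖)`. -/
theorem observability_estimate_length_ge
    (n m : ℕ) (A : Matrix (Fin n) (Fin n) ℝ) (C : Matrix (Fin m) (Fin n) ℝ)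
    (hobs : CompletelyObservable n m A C) (δ : ℝ) (hδ : 0 < δ) :
    ∃ c > 0, ∀ (a b : ℝ), δ ≤ b - a →
      ∀ (z f : ℝ → EuclideanSpace ℝ (Fin n)),
        ContinuousOn z (Set.Icc a b) →
        IntegrableOn f (Set.Icc a b) →
        (∀ t ∈ Set.Icc a b,
          z t = z a + ∫ s in a..t, (Matrix.toEuclideanLin A (z s) + f s)) →
        (∫ t in Set.Icc a b, ‖z t‖) ≤
          c * ((∫ t in Set.Icc a b, ‖Matrix.toEuclideanLin C (z t)‖) +
               ∫ t in Set.Icc a b, ‖f t‖) := by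
  obtain ⟨c, hc, H⟩ := observability_estimate_length_ge_general hobs.isObservable hδ
  exact ⟨c, hc, fun a b hab z f hz hf h => H a b hab z f ⟨hz, hf, h⟩⟩
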